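/- Let V be a leafless rooted directed tree and μ=(μ_v)_{v∈V} a weight of nonzero scalars. Let 1<p<∞ and suppose the unweighted backward shift B is an operator on ℓ^p(V,μ). Then B is chaotic on ℓ^p(V,μ) if and only if c_p(V(v),μ)<∞ for every v∈V. -/

import Mathlib

open scoped ENNReal NNReal Topology Classical
open Filter

namespace PaperTree

/-! ### Directed trees -/

variable {V : Type*}

/-- Iterated parent map of a directed tree given by a parent function. -/
def parIter (par : V → Option V) : ℕ → V → Option V
  | 0, v => some v
  | n + 1, v => (par v).bind (parIter par n)

/-- `par` is the parent function of a (countable, connected, acyclic) directed tree on `V`,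
in which every vertex has at most one parent and at most one vertex (the root) has none. -/
structure IsDirectedTree (par : V → Option V) : Prop where
  countable : Countable V
  acyclic : ∀ (v : V) (n : ℕ), 0 < n → parIter par n v ≠ some v
  connected : ∀ u v : V, ∃ (m n : ℕ) (w : V), parIter par m u = some w ∧ parIter par n v = some w
  root_unique : ∀ u v : V, par u = none → par v = none → u = v

/-- The set of children of `v`. -/
def children (par : V → Option V) (v : V) : Set V := {u : V | par u = some v}

/-- The set of descendants of `v` (including `v`); the rooted subtree `V(v)`. -/
def descendants (par : V → Option V) (v : V) : Set V := {u : V | ∃ n : ℕ, parIter par n u = some v}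

def IsLeafV (par : V → Option V) (v : V) : Prop := children par v = ∅

def Leafless (par : V → Option V) : Prop := ∀ v : V, children par v ≠ ∅

def IsRoot (par : V → Option V) (v : V) : Prop := par v = none

def Rooted (par : V → Option V) : Prop := ∃ v : V, IsRoot par v

def Unrooted (par : V → Option V) : Prop := ∀ v : V, par v ≠ none

/-- The tree has a free left end: some vertex all of whose (proper) ancestors
have exactly one child. -/
def HasFreeLeftEnd (par : V → Option V) : Prop :=
  ∃ v : V, ∀ n : ℕ, 1 ≤ n → ∀ w : V, parIter par n v = some w → ∃! u : V, u ∈ children par w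

/-- The tree has finite length (all branches have uniformly bounded length). -/
def FiniteLength (par : V → Option V) : Prop := ∃ m : ℕ, ∀ u : V, parIter par (m + 1) u = none

/-- Product of the weights along the upward path of length `n` ending at `u`;
for `u ∈ Chi^n(v)` this is `λ(v → u)`, and `pathProd par lam n v = λ(par^n(v) → v)`. -/
def pathProd {𝕜 : Type*} [Monoid 𝕜] (par : V → Option V) (lam : V → 𝕜) : ℕ → V → 𝕜
  | 0, _ => 1
  | n + 1, u => lam u * ((par u).elim 1 (pathProd par lam n))

/-- A (finite or infinite, maximal) branch starting at `v`, encoded with `Option`. -/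
def IsOptBranch (par : V → Option V) (v : V) (b : ℕ → Option V) : Prop :=
  b 0 = some v ∧
  (∀ (k : ℕ) (w : V), b k = some w →
      (children par w = ∅ ∧ b (k + 1) = none) ∨ ∃ u ∈ children par w, b (k + 1) = some u) ∧
  ∀ k : ℕ, b k = none → b (k + 1) = none

/-- An infinite branch starting at `v` (adequate for leafless trees). -/
def IsBranch (par : V → Option V) (v : V) (b : ℕ → V) : Prop :=
  b 0 = v ∧ ∀ k : ℕ, b (k + 1) ∈ children par (b k)

/-- The `[0,∞]`-valued absolute weight associated with a scalar weight. -/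
noncomputable def nw {𝕜 : Type*} [RCLike 𝕜] (μ : V → 𝕜) : V → ℝ≥0∞ := fun v => (‖μ v‖₊ : ℝ≥0∞)

/-! ### Linear dynamics -/

section Dynamics

variable {𝕜 : Type*} [RCLike 𝕜] {X : Type*} [AddCommGroup X] [Module 𝕜 X] [TopologicalSpace X]

/-- An operator is hypercyclic if some vector has dense orbit. -/
def Hypercyclic (T : X →L[𝕜] X) : Prop :=
  ∃ x : X, Dense (Set.range fun n : ℕ => (T ^ n) x)

/-- A periodic point of the operator `T`. -/
def IsPeriodicPoint (T : X →L[𝕜] X) (x : X) : Prop :=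
  ∃ N : ℕ, 1 ≤ N ∧ (T ^ N) x = x

/-- An operator is chaotic if it is hypercyclic and has a dense set of periodic points. -/
def ChaoticOp (T : X →L[𝕜] X) : Prop :=
  Hypercyclic T ∧ Dense {x : X | IsPeriodicPoint T x}

/-- Topological mixing. -/
def MixingOp (T : X →L[𝕜] X) : Prop :=
  ∀ U₁ U₂ : Set X, IsOpen U₁ → IsOpen U₂ → U₁.Nonempty → U₂.Nonempty →
    ∃ m : ℕ, ∀ n : ℕ, m ≤ n → ((⇑(T ^ n)) '' U₁ ∩ U₂).Nonempty

/-- Weak mixing: `T ⊕ T` is hypercyclic on `X × X`. -/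
def WeaklyMixingOp (T : X →L[𝕜] X) : Prop :=
  Hypercyclic (T.prodMap T)

variable {V : Type*}

/-- `T` is (a representation via the coefficient embedding `ι` of) the weighted backward
shift `B_λ` as an operator on `X`: for every `x ∈ X` and every vertex `v` the defining
series converges unconditionally to the `v`-th coefficient of `T x`. -/
def IsShiftRep (par : V → Option V) (lam : V → 𝕜) (ι : X →ₗ[𝕜] V → 𝕜) (T : X →L[𝕜] X) : Prop :=
  ∀ (x : X) (v : V), HasSum (fun u : ↥(children par v) => lam u.1 * ι x u.1) (ι (T x) v)

end Dynamics

/-! ### The generalized continued fractions `c_p` and resistances `r_p` -/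

section Constants

/-- Conjugate exponent. -/
noncomputable def conjExp (p : ℝ) : ℝ := p / (p - 1)

variable {V : Type*}

/-- `cpAux chi w p m v` is the continued fraction `c_p` of the subtree of descendants of `v`
(with respect to the children map `chi`) truncated at depth `m`, with weight `w`. -/
noncomputable def cpAux (chi : V → Set V) (w : V → ℝ≥0∞) (p : ℝ) : ℕ → V → ℝ≥0∞
  | 0, _ => 0
  | m + 1, v =>
      if chi v = ∅ then 0
      else (∑' u : ↥(chi v),
              (w u.1 ^ p + cpAux chi w p m u.1 ^ p) ^ (-(conjExp p / p))) ^ (-(1 / conjExp p))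

/-- The continued fraction `c_p(V(v), w)` of order `1 < p < ∞`. -/
noncomputable def cpC (chi : V → Set V) (w : V → ℝ≥0∞) (p : ℝ) (v : V) : ℝ≥0∞ :=
  ⨆ m : ℕ, cpAux chi w p m v

/-- The resistance `r_p(V(v), w)` of order `1 < p < ∞`. -/
noncomputable def rpC (chi : V → Set V) (w : V → ℝ≥0∞) (p : ℝ) (v : V) : ℝ≥0∞ :=
  (w v ^ p + cpC chi w p v ^ p) ^ (1 / p)

/-- Truncated continued fraction of order `p = ∞`. -/
noncomputable def cInfAux (chi : V → Set V) (w : V → ℝ≥0∞) : ℕ → V → ℝ≥0∞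
  | 0, _ => 0
  | m + 1, v =>
      if chi v = ∅ then 0
      else (∑' u : ↥(chi v), (max (w u.1) (cInfAux chi w m u.1))⁻¹)⁻¹

/-- The continued fraction `c_∞(V(v), w)`. -/
noncomputable def cInfC (chi : V → Set V) (w : V → ℝ≥0∞) (v : V) : ℝ≥0∞ :=
  ⨆ m : ℕ, cInfAux chi w m v

/-- The resistance `r_∞(V(v), w)`. -/
noncomputable def rInfC (chi : V → Set V) (w : V → ℝ≥0∞) (v : V) : ℝ≥0∞ :=
  max (w v) (cInfC chi w v)

end Constants

/-! ### Concrete sequence spaces `ℓ^p(V, μ)` and `c₀(V, μ)`, up to isometry -/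

section SpaceRep

variable {𝕜 : Type*} [RCLike 𝕜] {V : Type*} {X : Type*} [NormedAddCommGroup X] [NormedSpace 𝕜 X]

/-- `X` is (an isometric copy of) the weighted space `ℓ^p(V, μ)`, the identification being
given by the coefficient embedding `ι`. -/
def IsLpSpaceRep (ι : X →ₗ[𝕜] V → 𝕜) (μ : V → 𝕜) (p : ℝ) : Prop :=
  Function.Injective ι ∧
  (∀ f : V → 𝕜, (∑' v : V, (‖f v * μ v‖₊ : ℝ≥0∞) ^ p) < ⊤ ↔ f ∈ Set.range ι) ∧
  ∀ x : X, (‖x‖₊ : ℝ≥0∞) = (∑' v : V, (‖ι x v * μ v‖₊ : ℝ≥0∞) ^ p) ^ (1 / p)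

/-- `X` is (an isometric copy of) the weighted space `c₀(V, μ)`. -/
def IsC0SpaceRep (ι : X →ₗ[𝕜] V → 𝕜) (μ : V → 𝕜) : Prop :=
  Function.Injective ι ∧
  (∀ f : V → 𝕜, (∀ ε : ℝ, 0 < ε → {v : V | ε ≤ ‖f v * μ v‖}.Finite) ↔ f ∈ Set.range ι) ∧
  ∀ x : X, (‖x‖₊ : ℝ≥0∞) = ⨆ v : V, (‖ι x v * μ v‖₊ : ℝ≥0∞)

end SpaceRep

/-! ### Tree helpers -/

lemma parIter_succ' (par : V → Option V) (n : ℕ) {u w : V} (h : par u = some w) :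
    parIter par (n + 1) u = parIter par n w := by
  simp [parIter, h]

lemma parIter_add (par : V → Option V) (m n : ℕ) (u : V) :
    parIter par (m + n) u = (parIter par m u).bind (parIter par n) := by
  induction m generalizing u with
  | zero => simp [parIter]
  | succ m ih =>
    rw [show m + 1 + n = (m + n) + 1 by ring]
    simp only [parIter]
    cases par u with
    | none => rfl
    | some w => simpa using ih w

lemma parIter_inj {par : V → Option V} (hTree : IsDirectedTree par) {m n : ℕ} {u v : V}
    (hm : parIter par m u = some v) (hn : parIter par n u = some v) : m = n := by
  wlog h : m ≤ n generalizing m n with H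
  · exact (H hn hm (le_of_not_ge h)).symm
  obtain ⟨k, rfl⟩ := Nat.exists_eq_add_of_le h
  rw [parIter_add, hm] at hn
  by_contra hne
  exact hTree.acyclic v k (by omega) hn

lemma exists_depth {par : V → Option V} (hTree : IsDirectedTree par) {root : V}
    (hroot : IsRoot par root) (u : V) : ∃ n, parIter par n u = some root := by
  obtain ⟨m, n, w, h1, h2⟩ := hTree.connected root u
  cases m with
  | zero => simp [parIter] at h1; exact ⟨n, h1 ▸ h2⟩
  | succ m =>
    have : par root = none := hroot
    simp [parIter, this] at h1

lemma parIter_none {par : V → Option V} (hTree : IsDirectedTree par) {root : V}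
    (hroot : IsRoot par root) (u : V) : ∃ d, ∀ m, d < m → parIter par m u = none := by
  obtain ⟨d, hd⟩ := exists_depth hTree hroot u
  refine ⟨d, fun m hm => ?_⟩
  obtain ⟨k, rfl⟩ := Nat.exists_eq_add_of_lt hm
  have : par root = none := hroot
  rw [add_assoc, parIter_add, hd]
  simp [parIter, this]

/-- Sum of `g` over the `n`-th generation below `v`. -/
noncomputable def Sn (par : V → Option V) (g : V → ℝ≥0∞) (n : ℕ) (v : V) : ℝ≥0∞ :=
  ∑' u, if parIter par n u = some v then g u else 0

lemma tsum_children (par : V → Option V) (v : V) (f : V → ℝ≥0∞) :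
    ∑' u : ↥(children par v), f u.1 = ∑' u, if par u = some v then f u else 0 := by
  rw [tsum_subtype (children par v) f]
  refine tsum_congr fun u => ?_
  simp only [Set.indicator_apply, children, Set.mem_ofPred_eq]

lemma Sn_zero (par : V → Option V) (g : V → ℝ≥0∞) (v : V) : Sn par g 0 v = g v := by
  simp [Sn, parIter]

/-- peel at the top -/
lemma Sn_succ_top (par : V → Option V) (g : V → ℝ≥0∞) (n : ℕ) (v : V) :
    Sn par g (n + 1) v = ∑' w : ↥(children par v), Sn par g n w.1 := by
  rw [tsum_children par v (fun w => Sn par g n w)]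
  have : ∀ w, (if par w = some v then Sn par g n w else 0) =
      ∑' u, if par w = some v then (if parIter par n u = some w then g u else 0) else 0 := by
    intro w; split_ifs <;> simp [Sn]
  simp_rw [this]
  rw [ENNReal.tsum_comm]
  refine tsum_congr fun u => ?_
  rw [parIter_add par n 1 u]
  cases h : parIter par n u with
  | none => simp
  | some w =>
    rw [tsum_eq_single w]
    · simp [parIter]
    · intro b hb
      simp [hb.symm]

/-- peel at the bottom -/
lemma Sn_succ_bot (par : V → Option V) (g : V → ℝ≥0∞) (n : ℕ) (v : V) :
    Sn par g (n + 1) v = Sn par (fun w => ∑' u : ↥(children par w), g u.1) n v := by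
  unfold Sn
  have : ∀ w, (if parIter par n w = some v then ∑' u : ↥(children par w), g u.1 else 0) =
      ∑' u, if parIter par n w = some v then (if par u = some w then g u else 0) else 0 := by
    intro w; rw [tsum_children]; split_ifs <;> simp
  simp_rw [this]
  rw [ENNReal.tsum_comm]
  refine tsum_congr fun u => ?_
  cases h : par u with
  | none => simp [parIter, h]
  | some w =>
    rw [tsum_eq_single w, parIter_succ' par n h]
    · simp
    · intro b hb
      simp [hb.symm]

lemma Sn_mono (par : V → Option V) {g g' : V → ℝ≥0∞} (h : ∀ u, g u ≤ g' u) (n : ℕ) (v : V) :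
    Sn par g n v ≤ Sn par g' n v := by
  refine ENNReal.tsum_le_tsum fun u => ?_
  split_ifs
  · exact h u
  · exact le_rfl

lemma Sn_add (par : V → Option V) (g g' : V → ℝ≥0∞) (n : ℕ) (v : V) :
    Sn par (fun u => g u + g' u) n v = Sn par g n v + Sn par g' n v := by
  unfold Sn
  rw [← ENNReal.tsum_add]
  refine tsum_congr fun u => ?_
  split_ifs <;> simp

lemma sum_Sn_le {par : V → Option V} (hTree : IsDirectedTree par) (g : V → ℝ≥0∞) (m : ℕ) (v : V) :
    ∑ n ∈ Finset.range m, Sn par g (n + 1) v ≤ ∑' u, g u := by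
  unfold Sn
  rw [← Summable.tsum_finsetSum (fun _ _ => ENNReal.summable)]
  refine ENNReal.tsum_le_tsum fun u => ?_
  by_cases h : ∃ n, parIter par (n + 1) u = some v
  · obtain ⟨n, hn⟩ := h
    calc _ ≤ ∑ k ∈ Finset.range m, if k = n then g u else 0 := by
            refine Finset.sum_le_sum fun k _ => ?_
            split_ifs with h1 h2
            · exact le_rfl
            · exact absurd (by have := parIter_inj hTree h1 hn; omega) h2
            · exact bot_le
            · exact le_rfl
      _ ≤ g u := by
            rw [Finset.sum_ite_eq']
            split_ifs <;> simp
  · push Not at h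
    simp [h]

/-! ### ENNReal tools -/

lemma holder_tsum {α : Type*} {p q : ℝ} (hpq : p.HolderConjugate q) (f g : α → ℝ≥0∞) :
    ∑' a, f a * g a ≤ (∑' a, f a ^ p) ^ (1 / p) * (∑' a, g a ^ q) ^ (1 / q) := by
  let _ : MeasurableSpace α := ⊤
  have := ENNReal.lintegral_mul_le_Lp_mul_Lq (MeasureTheory.Measure.count : MeasureTheory.Measure α)
    hpq (f := f) (g := g) (measurable_from_top).aemeasurable (measurable_from_top).aemeasurable
  simpa [MeasureTheory.lintegral_count] using this

lemma tendsto_tsum_dom {α : Type*} (F : ℕ → α → ℝ≥0∞) (f bd : α → ℝ≥0∞)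
    (hb : ∀ n a, F n a ≤ bd a) (hfin : ∑' a, bd a ≠ ⊤)
    (hl : ∀ a, Tendsto (fun n => F n a) atTop (𝓝 (f a))) :
    Tendsto (fun n => ∑' a, F n a) atTop (𝓝 (∑' a, f a)) := by
  let _ : MeasurableSpace α := ⊤
  have := MeasureTheory.tendsto_lintegral_of_dominated_convergence
    (μ := (MeasureTheory.Measure.count : MeasureTheory.Measure α)) (F := F) (f := f) bd
    (fun n => measurable_from_top) (fun n => Filter.Eventually.of_forall (hb n))
    (by simpa [MeasureTheory.lintegral_count] using hfin) (Filter.Eventually.of_forall hl)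
  simpa [MeasureTheory.lintegral_count] using this

lemma holderConj {p : ℝ} (hp : 1 < p) : p.HolderConjugate (conjExp p) :=
  Real.HolderConjugate.conjExponent hp

/-- Hölder step for the continued fraction. -/
lemma step_holder {α : Type*} {p : ℝ} (hp : 1 < p) (y H : α → ℝ≥0∞) (hy : ∀ a, y a ≠ 0)
    (h : ℝ≥0∞) (hh : h ≤ ∑' a, H a) :
    ((∑' a, (y a) ^ (-(conjExp p / p))) ^ (-(1 / conjExp p))) ^ p * h ^ p ≤
      ∑' a, H a ^ p * y a := by
  have hpq := holderConj hp
  have p0 : 0 < p := hpq.pos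
  have q0 : 0 < conjExp p := hpq.symm.pos
  set q := conjExp p with hq
  by_cases hE : ∑' a, H a ^ p * y a = ⊤
  · rw [hE]; exact le_top
  have hterm : ∀ a, H a ≤ (H a * y a ^ (1 / p)) * (y a ^ (-(1 / p))) := by
    intro a
    by_cases hya : y a = ⊤
    · have h1 : H a ^ p * y a ≠ ⊤ := ENNReal.ne_top_of_tsum_ne_top hE a
      by_cases hH : H a = 0
      · simp [hH]
      · exfalso; apply h1; rw [hya]
        apply ENNReal.mul_top
        simp [ENNReal.rpow_eq_zero_iff, hH, p0, not_lt.2 p0.le]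
    · rw [mul_assoc, ← ENNReal.rpow_add _ _ (hy a) hya]
      simp
  have key : h ≤ (∑' a, H a ^ p * y a) ^ (1 / p) * (∑' a, (y a) ^ (-(q / p))) ^ (1 / q) := by
    calc h ≤ ∑' a, H a := hh
      _ ≤ ∑' a, (H a * y a ^ (1 / p)) * (y a ^ (-(1 / p))) := ENNReal.tsum_le_tsum hterm
      _ ≤ _ := holder_tsum hpq _ _
      _ = _ := by
        congr 2
        · refine tsum_congr fun a => ?_
          rw [ENNReal.mul_rpow_of_nonneg _ _ p0.le, ← ENNReal.rpow_mul]
          field_simp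
          simp
        · refine tsum_congr fun a => ?_
          rw [← ENNReal.rpow_mul]
          congr 1
          field_simp
  rw [← ENNReal.mul_rpow_of_nonneg _ _ p0.le]
  set R := (∑' a, (y a) ^ (-(q / p))) ^ (1 / q) with hR
  rw [ENNReal.rpow_neg, ← hR]
  calc (R⁻¹ * h) ^ p ≤ ((∑' a, H a ^ p * y a) ^ (1 / p)) ^ p := by
        refine ENNReal.rpow_le_rpow ?_ p0.le
        calc R⁻¹ * h ≤ R⁻¹ * ((∑' a, H a ^ p * y a) ^ (1 / p) * R) := by gcongr
          _ = (R⁻¹ * R) * (∑' a, H a ^ p * y a) ^ (1 / p) := by ring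
          _ ≤ 1 * (∑' a, H a ^ p * y a) ^ (1 / p) := by
              gcongr; exact ENNReal.inv_mul_le_one R
          _ = _ := one_mul _
    _ = _ := by rw [← ENNReal.rpow_mul]; simp [p0.ne']

/-- A subflow bounds the truncated continued fractions. -/
lemma cpAux_le {par : V → Option V} (hL : Leafless par) {p : ℝ} (hp : 1 < p)
    (w : V → ℝ≥0∞) (hw : ∀ v, w v ≠ 0) (H : V → ℝ≥0∞)
    (hH : ∀ v, H v ≤ ∑' u : ↥(children par v), H u.1) (m : ℕ) (v : V) :
    cpAux (children par) w p m v ^ p * H v ^ p ≤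
      ∑ n ∈ Finset.range m, Sn par (fun u => H u ^ p * w u ^ p) (n + 1) v := by
  have p0 : 0 < p := by linarith
  induction m generalizing v with
  | zero => simp [cpAux, p0]
  | succ m ih =>
    rw [cpAux, if_neg (hL v)]
    refine (step_holder hp (fun u : ↥(children par v) =>
      w u.1 ^ p + cpAux (children par) w p m u.1 ^ p) (fun u => H u.1) ?_ (H v) (hH v)).trans ?_
    · intro u
      have := hw u.1
      simp [ENNReal.rpow_eq_zero_iff, this, p0, not_lt.2 p0.le]
    · simp_rw [Sn_succ_top par _ _ v]
      rw [← Summable.tsum_finsetSum (fun _ _ => ENNReal.summable)]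
      refine ENNReal.tsum_le_tsum fun u => ?_
      rw [Finset.sum_range_succ', Sn_zero, mul_add, add_comm]
      gcongr
      rw [mul_comm]
      exact ih u.1

lemma cpC_lt_top_of_flow {par : V → Option V} (hTree : IsDirectedTree par)
    (hL : Leafless par) {p : ℝ} (hp : 1 < p)
    (w : V → ℝ≥0∞) (hw : ∀ v, w v ≠ 0) (H : V → ℝ≥0∞)
    (hH : ∀ v, H v ≤ ∑' u : ↥(children par v), H u.1)
    (hfin : ∑' u, H u ^ p * w u ^ p ≠ ⊤) (v : V) (hv : H v ≠ 0) (hv' : H v ≠ ⊤):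
    cpC (children par) w p v < ⊤ := by
  have p0 : 0 < p := by linarith
  set C := ∑' u, H u ^ p * w u ^ p with hC
  have hb : ∀ m, cpAux (children par) w p m v ≤ (C / H v ^ p) ^ (1 / p) := by
    intro m
    have h1 := (cpAux_le hL hp w hw H hH m v).trans (sum_Sn_le hTree _ m v)
    rw [one_div, ENNReal.le_rpow_inv_iff p0, ENNReal.le_div_iff_mul_le]
    · exact h1
    · left; simp [ENNReal.rpow_eq_zero_iff, hv, p0, not_lt.2 p0.le]
    · left; exact ENNReal.rpow_ne_top_of_nonneg p0.le hv'
  refine (iSup_le hb).trans_lt ?_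
  refine ENNReal.rpow_lt_top_of_nonneg (by positivity) ?_
  refine ENNReal.div_ne_top hfin ?_
  simp [ENNReal.rpow_eq_zero_iff, hv, p0, not_lt.2 p0.le]
/-! ### Existence of a positive flow of finite energy -/

lemma cpAux_mono {par : V → Option V} (hL : Leafless par) {p : ℝ} (hp : 1 < p)
    (w : V → ℝ≥0∞) (v : V) : Monotone (fun m => cpAux (children par) w p m v) := by
  have hpq := holderConj hp
  have p0 : 0 < p := hpq.pos
  have q0 : 0 < conjExp p := hpq.symm.pos
  refine monotone_nat_of_le_succ fun m => ?_
  induction m generalizing v with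
  | zero => simp [cpAux]
  | succ m ih =>
    rw [cpAux, cpAux, if_neg (hL v), if_neg (hL v), ENNReal.rpow_neg, ENNReal.rpow_neg]
    refine ENNReal.inv_le_inv.2 (ENNReal.rpow_le_rpow (ENNReal.tsum_le_tsum fun u => ?_)
      (by positivity))
    rw [ENNReal.rpow_neg, ENNReal.rpow_neg]
    refine ENNReal.inv_le_inv.2 (ENNReal.rpow_le_rpow ?_ (by positivity))
    gcongr
    exact ih u.1

lemma cpC_ge {par : V → Option V} (hL : Leafless par) {p : ℝ} (hp : 1 < p)
    (w : V → ℝ≥0∞)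
    (hsum : ∀ v, ∑' u : ↥(children par v), w u.1 ^ (-(conjExp p)) ≠ ⊤) (v : V) :
    (∑' u : ↥(children par v), (w u.1 ^ p + cpC (children par) w p u.1 ^ p) ^ (-(conjExp p / p)))
      ^ (-(1 / conjExp p)) ≤ cpC (children par) w p v := by
  have hpq := holderConj hp
  have p0 : 0 < p := hpq.pos
  have q0 : 0 < conjExp p := hpq.symm.pos
  have h1 : Tendsto (fun m => ∑' u : ↥(children par v),
      (w u.1 ^ p + cpAux (children par) w p m u.1 ^ p) ^ (-(conjExp p / p))) atTop
      (𝓝 (∑' u : ↥(children par v),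
        (w u.1 ^ p + cpC (children par) w p u.1 ^ p) ^ (-(conjExp p / p)))) := by
    refine tendsto_tsum_dom _ _ (fun u => w u.1 ^ (-(conjExp p))) ?_ (hsum v) ?_
    · intro n u
      have : w u.1 ^ (-(conjExp p)) = (w u.1 ^ p) ^ (-(conjExp p / p)) := by
        rw [← ENNReal.rpow_mul]; congr 1; field_simp
      rw [this, ENNReal.rpow_neg, ENNReal.rpow_neg]
      refine ENNReal.inv_le_inv.2 (ENNReal.rpow_le_rpow ?_ (by positivity))
      exact le_self_add
    · intro u
      have h2 : Tendsto (fun m => cpAux (children par) w p m u.1) atTop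
          (𝓝 (cpC (children par) w p u.1)) := tendsto_atTop_iSup (cpAux_mono hL hp w u.1)
      have h3 := (ENNReal.continuous_rpow_const (y := p)).continuousAt.tendsto.comp h2
      have h4 := h3.const_add (w u.1 ^ p)
      exact (ENNReal.continuous_rpow_const (y := -(conjExp p / p))).continuousAt.tendsto.comp h4
  have h5 := (ENNReal.continuous_rpow_const (y := -(1 / conjExp p))).continuousAt.tendsto.comp h1
  refine le_of_tendsto' h5 fun m => ?_
  have := le_iSup (fun m => cpAux (children par) w p m v) (m + 1)
  simp only [cpAux, if_neg (hL v)] at this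
  exact this

lemma exists_flow {par : V → Option V} (hTree : IsDirectedTree par) (hL : Leafless par)
    {root : V} (hroot : IsRoot par root) {p : ℝ} (hp : 1 < p)
    (w : V → ℝ≥0∞) (hw : ∀ v, w v ≠ 0) (hw' : ∀ v, w v ≠ ⊤)
    (hsum : ∀ v, ∑' u : ↥(children par v), w u.1 ^ (-(conjExp p)) ≠ ⊤)
    (hc : ∀ v, cpC (children par) w p v < ⊤) :
    ∃ P : V → ℝ≥0∞, (∀ v, P v ≠ 0 ∧ P v ≠ ⊤) ∧
      (∀ v, ∑' u : ↥(children par v), P u.1 = P v) ∧ ∑' u, P u ^ p * w u ^ p ≠ ⊤ := by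
  have hpq := holderConj hp
  have p0 : 0 < p := hpq.pos
  have q0 : 0 < conjExp p := hpq.symm.pos
  set c := cpC (children par) w p with hcdef
  set y : V → ℝ≥0∞ := fun u => w u ^ p + c u ^ p with hy
  have y0 : ∀ u, y u ≠ 0 := fun u => by
    simp [hy, ENNReal.rpow_eq_zero_iff, hw u, p0, not_lt.2 p0.le]
  have ytop : ∀ u, y u ≠ ⊤ := fun u => by
    simp only [hy]
    exact ENNReal.add_ne_top.2 ⟨ENNReal.rpow_ne_top_of_nonneg p0.le (hw' u),
      ENNReal.rpow_ne_top_of_nonneg p0.le (hc u).ne⟩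
  set t : V → ℝ≥0∞ := fun u => y u ^ (-(conjExp p / p)) with ht
  have t0 : ∀ u, t u ≠ 0 := fun u => (ENNReal.rpow_pos (y0 u).bot_lt (ytop u)).ne'
  have ttop : ∀ u, t u ≠ ⊤ := fun u => ENNReal.rpow_ne_top_of_ne_zero (y0 u) (ytop u)
  set S : V → ℝ≥0∞ := fun v => ∑' u : ↥(children par v), t u.1 with hS
  have S0 : ∀ v, S v ≠ 0 := fun v => by
    obtain ⟨u, hu⟩ := Set.nonempty_iff_ne_empty.2 (hL v)
    intro h0
    exact t0 u (ENNReal.tsum_eq_zero.1 h0 ⟨u, hu⟩)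
  have Stop : ∀ v, S v ≠ ⊤ := fun v => by
    refine ne_top_of_le_ne_top (hsum v) (ENNReal.tsum_le_tsum fun u => ?_)
    have : w u.1 ^ (-(conjExp p)) = (w u.1 ^ p) ^ (-(conjExp p / p)) := by
      rw [← ENNReal.rpow_mul]; congr 1; field_simp
    rw [this]
    simp only [ht]
    rw [ENNReal.rpow_neg, ENNReal.rpow_neg]
    refine ENNReal.inv_le_inv.2 (ENNReal.rpow_le_rpow ?_ (by positivity))
    exact le_self_add
  choose d hd using exists_depth hTree hroot
  have dsucc : ∀ u v, par u = some v → d u = d v + 1 := fun u v h =>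
    parIter_inj hTree (hd u) (by rw [parIter_succ' par _ h]; exact hd v)
  have droot : d root = 0 := parIter_inj hTree (hd root) rfl
  let Q : V → ℝ≥0∞ := fun u => (par u).elim 1 (fun v => t u / S v)
  let P : V → ℝ≥0∞ := fun u => pathProd par Q (d u) u
  have Proot : P root = 1 := by simp only [P, droot, pathProd]
  have Psucc : ∀ u v, par u = some v → P u = t u / S v * P v := by
    intro u v h
    simp only [P, dsucc u v h, pathProd, Q, h, Option.elim]
  have hP : ∀ n u, d u = n → P u ≠ 0 ∧ P u ≠ ⊤ := by
    intro n
    induction n with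
    | zero =>
      intro u hu
      have : u = root := by
        have := hd u
        rw [hu] at this
        simpa [parIter] using this
      rw [this, Proot]; simp
    | succ n ih =>
      intro u hu
      cases h : par u with
      | none =>
        have := hTree.root_unique u root h hroot
        rw [this, droot] at hu
        omega
      | some v =>
        have := ih v (by have := dsucc u v h; omega)
        rw [Psucc u v h]
        exact ⟨mul_ne_zero (ENNReal.div_ne_zero.2 ⟨t0 u, Stop v⟩) this.1,
          ENNReal.mul_ne_top (ENNReal.div_ne_top (ttop u) (S0 v)) this.2⟩
  have hflow : ∀ v, ∑' u : ↥(children par v), P u.1 = P v := by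
    intro v
    have : ∀ u : ↥(children par v), P u.1 = t u.1 * ((S v)⁻¹ * P v) := fun u => by
      rw [Psucc u.1 v u.2, div_eq_mul_inv, mul_assoc]
    simp_rw [this]
    rw [ENNReal.tsum_mul_right]
    change S v * _ = _
    rw [← mul_assoc, ENNReal.mul_inv_cancel (S0 v) (Stop v), one_mul]
  refine ⟨P, fun v => hP _ v rfl, hflow, ?_⟩
  set a : V → ℝ≥0∞ := fun u => P u ^ p * w u ^ p with ha
  set e : V → ℝ≥0∞ := fun u => P u ^ p * c u ^ p with he
  have hstep : ∀ v, ∑' u : ↥(children par v), (a u.1 + e u.1) ≤ e v := by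
    intro v
    have h1 : ∀ u : ↥(children par v), a u.1 + e u.1 = t u.1 * (P v ^ p * S v ^ (-p)) := by
      intro u
      simp only [ha, he]
      rw [← mul_add]
      change _ * y u.1 = _
      rw [Psucc u.1 v u.2, div_eq_mul_inv, ENNReal.mul_rpow_of_nonneg _ _ p0.le,
        ENNReal.mul_rpow_of_nonneg _ _ p0.le, ENNReal.inv_rpow, ← ENNReal.rpow_neg]
      have : t u.1 ^ p * y u.1 = t u.1 := by
        simp only [ht]
        rw [← ENNReal.rpow_mul]
        nth_rewrite 2 [← ENNReal.rpow_one (y u.1)]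
        rw [← ENNReal.rpow_add _ _ (y0 _) (ytop _)]
        congr 1
        have := hpq.sub_one_ne_zero
        simp only [conjExp]
        field_simp
        ring
      calc _ = (t u.1 ^ p * y u.1) * (P v ^ p * S v ^ (-p)) := by ring
        _ = _ := by rw [this]
    simp_rw [h1]
    rw [ENNReal.tsum_mul_right]
    change S v * _ ≤ _
    have h2 := ENNReal.rpow_le_rpow (cpC_ge hL hp w hsum v) p0.le
    change (S v ^ (-(1 / conjExp p))) ^ p ≤ c v ^ p at h2
    simp only [he]
    calc S v * (P v ^ p * S v ^ (-p)) = P v ^ p * (S v ^ (1 : ℝ) * S v ^ (-p)) := by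
          rw [ENNReal.rpow_one]; ring
      _ = P v ^ p * (S v ^ (-(1 / conjExp p))) ^ p := by
          rw [← ENNReal.rpow_add _ _ (S0 _) (Stop _), ← ENNReal.rpow_mul]
          congr 2
          have := hpq.sub_one_ne_zero
          simp only [conjExp]
          field_simp
          ring
      _ ≤ _ := by gcongr
  have hind : ∀ m, ∑ n ∈ Finset.range m, Sn par a (n + 1) root + Sn par e m root ≤ e root := by
    intro m
    induction m with
    | zero => simp [Sn_zero]
    | succ m ih =>
      rw [Finset.sum_range_succ, add_assoc, ← Sn_add, Sn_succ_bot]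
      refine le_trans ?_ ih
      gcongr
      exact Sn_mono par hstep m root
  have hle : ∑' u, a u ≤ ∑' n, Sn par a n root := by
    unfold Sn
    rw [ENNReal.tsum_comm]
    refine ENNReal.tsum_le_tsum fun u => ?_
    refine le_trans ?_ (ENNReal.le_tsum (d u))
    rw [if_pos (hd u)]
  refine ne_top_of_le_ne_top ?_ (hle.trans (b := ∑' n, Sn par a n root) (c := a root + e root) ?_)
  · have h1 : P root ^ p ≠ ⊤ := ENNReal.rpow_ne_top_of_nonneg p0.le (hP _ root rfl).2
    exact ENNReal.add_ne_top.2 ⟨ENNReal.mul_ne_top h1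
      (ENNReal.rpow_ne_top_of_nonneg p0.le (hw' root)), ENNReal.mul_ne_top h1
      (ENNReal.rpow_ne_top_of_nonneg p0.le (hc root).ne)⟩
  · rw [tsum_eq_zero_add' ENNReal.summable, Sn_zero]
    gcongr
    rw [ENNReal.tsum_eq_iSup_nat]
    exact iSup_le fun m => le_self_add.trans (hind m)
/-! ### A criterion for chaos -/

section Criterion

variable {𝕜 : Type*} [RCLike 𝕜] {X : Type*} [NormedAddCommGroup X] [NormedSpace 𝕜 X]

/-- The property of vectors used in the criterion. -/
def GoodVec (T : X →L[𝕜] X) (y : X) : Prop :=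
  (∀ᶠ n in atTop, (T ^ n) y = 0) ∧
  (∃ s : ℕ → X, Tendsto s atTop (𝓝 0) ∧ ∀ᶠ n in atTop, (T ^ n) (s n) = y) ∧
  (∃ s : ℕ → X, Tendsto s atTop (𝓝 y) ∧ ∀ᶠ n in atTop, (T ^ n) (s n) = s n)

lemma goodVec_span (T : X →L[𝕜] X) (G : Set X) (hG : ∀ y ∈ G, GoodVec T y) (y : X)
    (hy : y ∈ Submodule.span 𝕜 G) : GoodVec T y := by
  induction hy using Submodule.span_induction with
  | mem x hx => exact hG x hx
  | zero =>
    refine ⟨by simp, ⟨fun _ => 0, tendsto_const_nhds, by simp⟩,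
      ⟨fun _ => 0, tendsto_const_nhds, by simp⟩⟩
  | add x y _ _ hx hy =>
    obtain ⟨a1, ⟨s, b1, c1⟩, ⟨q, d1, e1⟩⟩ := hx
    obtain ⟨a2, ⟨s', b2, c2⟩, ⟨q', d2, e2⟩⟩ := hy
    refine ⟨?_, ⟨fun n => s n + s' n, by simpa using b1.add b2, ?_⟩,
      ⟨fun n => q n + q' n, d1.add d2, ?_⟩⟩
    · filter_upwards [a1, a2] with n h1 h2
      rw [map_add, h1, h2, add_zero]
    · filter_upwards [c1, c2] with n h1 h2
      rw [map_add, h1, h2]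
    · filter_upwards [e1, e2] with n h1 h2
      rw [map_add, h1, h2]
  | smul k x _ hx =>
    obtain ⟨a1, ⟨s, b1, c1⟩, ⟨q, d1, e1⟩⟩ := hx
    refine ⟨?_, ⟨fun n => k • s n, by simpa using b1.const_smul k, ?_⟩,
      ⟨fun n => k • q n, d1.const_smul k, ?_⟩⟩
    · filter_upwards [a1] with n h1
      rw [map_smul, h1, smul_zero]
    · filter_upwards [c1] with n h1
      rw [map_smul, h1]
    · filter_upwards [e1] with n h1
      rw [map_smul, h1]

lemma chaotic_of_good [CompleteSpace X] (T : X →L[𝕜] X) (G : Set X) (hcount : G.Countable)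
    (hG : ∀ y ∈ G, GoodVec T y) (hdense : Dense (Submodule.span 𝕜 G : Set X)) :
    ChaoticOp T := by
  have hD := goodVec_span T G hG
  constructor
  · have hsep : TopologicalSpace.SeparableSpace X := by
      have h1 : TopologicalSpace.IsSeparable (Submodule.span 𝕜 G : Set X) :=
        (hcount.isSeparable).span
      have h2 := h1.closure
      rw [hdense.closure_eq] at h2
      exact TopologicalSpace.isSeparable_univ_iff.1 h2
    have : SecondCountableTopology X := UniformSpace.secondCountable_of_separable X
    set b := TopologicalSpace.countableBasis X with hb
    have hbc : b.Countable := TopologicalSpace.countable_countableBasis X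
    have hbase := TopologicalSpace.isBasis_countableBasis X
    have hdi : Dense (⋂ U ∈ b, ⋃ n : ℕ, (fun x => (T ^ n) x) ⁻¹' U) := by
      refine dense_biInter_of_isOpen ?_ hbc ?_
      · intro U hU
        exact isOpen_iUnion fun n => (hbase.isOpen hU).preimage (T ^ n).continuous
      · intro U hU
        rw [dense_iff_inter_open]
        intro W hW hWne
        obtain ⟨x, hxW, hx⟩ := hdense.inter_open_nonempty W hW hWne
        obtain ⟨y, hyU, hy⟩ := hdense.inter_open_nonempty U (hbase.isOpen hU)
          (TopologicalSpace.nonempty_of_mem_countableBasis hU)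
        obtain ⟨a1, -, -⟩ := hD x hx
        obtain ⟨-, ⟨s, b1, c1⟩, -⟩ := hD y hy
        have h1 : Tendsto (fun n => x + s n) atTop (𝓝 x) := by simpa using b1.const_add x
        have h2 := h1.eventually (hW.mem_nhds hxW)
        obtain ⟨n, h3, h4, h5⟩ := (a1.and (c1.and h2)).exists
        refine ⟨x + s n, h5, Set.mem_iUnion.2 ⟨n, ?_⟩⟩
        simp only [Set.mem_preimage, map_add, h3, h4, zero_add]
        exact hyU
    obtain ⟨x, hx⟩ := hdi.nonempty
    refine ⟨x, ?_⟩
    refine hbase.dense_iff.2 fun U hU hne => ?_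
    simp only [Set.mem_iInter] at hx
    obtain ⟨n, hn⟩ := Set.mem_iUnion.1 (hx U hU)
    exact ⟨(T ^ n) x, hn, n, rfl⟩
  · rw [dense_iff_inter_open]
    intro W hW hWne
    obtain ⟨x, hxW, hx⟩ := hdense.inter_open_nonempty W hW hWne
    obtain ⟨-, -, ⟨s, b1, c1⟩⟩ := hD x hx
    obtain ⟨n, h3, h4, h5⟩ :=
      ((b1.eventually (hW.mem_nhds hxW)).and (c1.and (eventually_ge_atTop 1))).exists
    exact ⟨s n, h3, n, h5, h4⟩

end Criterion

/-! ### The space -/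

section Space

variable {𝕜 : Type*} [RCLike 𝕜] {X : Type*} [NormedAddCommGroup X] [NormedSpace 𝕜 X]

lemma rep_sum {ι : X →ₗ[𝕜] V → 𝕜} {μ : V → 𝕜} {p : ℝ} (hp : 1 < p)
    (hX : IsLpSpaceRep ι μ p) (x : X) :
    ∑' v : V, (‖ι x v * μ v‖₊ : ℝ≥0∞) ^ p = (‖x‖₊ : ℝ≥0∞) ^ p := by
  have p0 : 0 < p := by linarith
  rw [hX.2.2 x, ← ENNReal.rpow_mul]
  field_simp
  simp

lemma coord_le {ι : X →ₗ[𝕜] V → 𝕜} {μ : V → 𝕜} {p : ℝ} (hp : 1 < p)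
    (hX : IsLpSpaceRep ι μ p) (x : X) (v : V) : ‖ι x v * μ v‖ ≤ ‖x‖ := by
  have p0 : 0 < p := by linarith
  have h1 := ENNReal.le_tsum (f := fun v : V => (‖ι x v * μ v‖₊ : ℝ≥0∞) ^ p) v
  rw [rep_sum hp hX, ENNReal.rpow_le_rpow_iff p0] at h1
  exact_mod_cast h1

lemma exists_single {ι : X →ₗ[𝕜] V → 𝕜} {μ : V → 𝕜} {p : ℝ} (hp : 1 < p)
    (hX : IsLpSpaceRep ι μ p) (F : Finset V) (c : V → 𝕜) :
    ∃ x : X, ι x = fun v => if v ∈ F then c v else 0 := by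
  have p0 : 0 < p := by linarith
  refine (hX.2.1 _).1 ?_
  rw [tsum_eq_sum (s := F)]
  · exact ENNReal.sum_lt_top.2 fun v _ => ENNReal.rpow_lt_top_of_nonneg p0.le (by simp)
  · intro v hv
    simp [hv, p0]

lemma exists_sub {ι : X →ₗ[𝕜] V → 𝕜} {μ : V → 𝕜} {p : ℝ} (hp : 1 < p)
    (hX : IsLpSpaceRep ι μ p) (x : X) (A : Set V) :
    ∃ y : X, ι y = fun v => if v ∈ A then ι x v else 0 := by
  have p0 : 0 < p := by linarith
  refine (hX.2.1 _).1 ?_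
  refine lt_of_le_of_lt (ENNReal.tsum_le_tsum fun v => ?_) ((hX.2.1 (ι x)).2 ⟨x, rfl⟩)
  split_ifs
  · exact le_rfl
  · simp [p0]

lemma tendsto_trunc {ι : X →ₗ[𝕜] V → 𝕜} {μ : V → 𝕜} {p : ℝ} (hp : 1 < p)
    (hX : IsLpSpaceRep ι μ p) (x : X) (A : ℕ → Set V) (hA : ∀ v, ∀ᶠ n in atTop, v ∉ A n)
    (y : ℕ → X) (hy : ∀ n, ι (y n) = fun v => if v ∈ A n then ι x v else 0) :
    Tendsto y atTop (𝓝 0) := by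
  have p0 : 0 < p := by linarith
  have h1 : Tendsto (fun n => ∑' v, (‖ι (y n) v * μ v‖₊ : ℝ≥0∞) ^ p) atTop
      (𝓝 (∑' _ : V, (0 : ℝ≥0∞))) := by
    refine tendsto_tsum_dom _ _ (fun v => (‖ι x v * μ v‖₊ : ℝ≥0∞) ^ p) ?_ ?_ ?_
    · intro n v
      rw [hy]
      dsimp only
      split_ifs
      · exact le_rfl
      · simp [p0]
    · exact ((hX.2.1 (ι x)).2 ⟨x, rfl⟩).ne
    · intro v
      refine tendsto_const_nhds.congr' ?_
      filter_upwards [hA v] with n hn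
      simp [hy, hn, p0]
  have h2 := (ENNReal.continuous_rpow_const (y := 1 / p)).continuousAt.tendsto.comp h1
  rw [tendsto_zero_iff_norm_tendsto_zero]
  have h3 : Tendsto (fun n => (‖y n‖₊ : ℝ≥0∞)) atTop (𝓝 ((0 : ℝ≥0) : ℝ≥0∞)) := by
    refine (h2.congr fun n => (hX.2.2 (y n)).symm).trans ?_
    simp [p0]
  have h4 := ENNReal.tendsto_coe.1 h3
  simpa using NNReal.tendsto_coe.2 h4

lemma weights_summable {par : V → Option V} {ι : X →ₗ[𝕜] V → 𝕜} {μ : V → 𝕜}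
    (hμ : ∀ v, μ v ≠ 0) {p : ℝ} (hp : 1 < p)
    (hX : IsLpSpaceRep ι μ p) (T : X →L[𝕜] X) (hT : IsShiftRep par (fun _ : V => (1 : 𝕜)) ι T)
    (v : V) : ∑' u : ↥(children par v), nw μ u.1 ^ (-(conjExp p)) ≠ ⊤ := by
  have hpq := holderConj hp
  have p0 : 0 < p := hpq.pos
  have q0 : 0 < conjExp p := hpq.symm.pos
  set q := conjExp p with hq
  have hmv : 0 < ‖μ v‖ := norm_pos_iff.2 (hμ v)
  set K := ‖T‖ / ‖μ v‖ with hK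
  have hK0 : 0 ≤ K := by positivity
  have key : ∀ F : Finset ↥(children par v), ∑ u ∈ F, ‖μ u.1‖ ^ (-q) ≤ K ^ q := by
    intro F
    set S := ∑ u ∈ F, ‖μ u.1‖ ^ (-q) with hS
    have hS0 : 0 ≤ S := Finset.sum_nonneg fun u _ => by positivity
    obtain ⟨x, hx⟩ := exists_single hp hX (F.map (Function.Embedding.subtype _))
      (fun u => ((‖μ u‖ ^ (-q) : ℝ) : 𝕜))
    have h1 : ι (T x) v = ((S : ℝ) : 𝕜) := by
      refine (hT x v).unique ?_
      have : ∀ u ∉ F, (1 : 𝕜) * ι x u.1 = 0 := by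
        intro u hu
        simp [hx, hu]
      have h2 : HasSum (fun u : ↥(children par v) => (1 : 𝕜) * ι x u.1)
          (∑ u ∈ F, (1 : 𝕜) * ι x u.1) := hasSum_sum_of_ne_finset_zero this
      convert h2 using 1
      rw [hS]
      push_cast
      refine Finset.sum_congr rfl fun u hu => ?_
      simp [hx, hu]
    have h2 : ‖x‖ = S ^ (1 / p) := by
      have h3 : ‖x‖ ^ p = S := by
        have h4 := rep_sum hp hX x
        rw [tsum_eq_sum (s := F.map (Function.Embedding.subtype _)), Finset.sum_map] at h4
        · have h5 : ∀ u ∈ F, (‖ι x (Function.Embedding.subtype _ u) *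
              μ (Function.Embedding.subtype _ u)‖₊ : ℝ≥0∞) ^ p
              = ENNReal.ofReal (‖μ u.1‖ ^ (-q)) := by
            intro u hu
            have hu0 : 0 < ‖μ u.1‖ := norm_pos_iff.2 (hμ u.1)
            have h6 : ‖ι x u.1 * μ u.1‖ = ‖μ u.1‖ ^ (-q + 1) := by
              rw [norm_mul, hx, Real.rpow_add hu0, Real.rpow_one]
              simp only [Finset.mem_map, Function.Embedding.subtype_apply, Subtype.exists,
                exists_and_right, exists_eq_right]
              rw [if_pos ⟨u.2, hu⟩, RCLike.norm_ofReal, abs_of_nonneg (by positivity)]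
            simp only [Function.Embedding.subtype_apply]
            rw [← enorm_eq_nnnorm, ← ofReal_norm, h6,
              ENNReal.ofReal_rpow_of_nonneg (by positivity) p0.le, ← Real.rpow_mul hu0.le]
            congr 2
            have := hpq.sub_one_ne_zero
            simp only [hq, conjExp]
            field_simp
            ring
          rw [Finset.sum_congr rfl h5, ← ENNReal.ofReal_sum_of_nonneg (fun u _ => by positivity),
            ← enorm_eq_nnnorm, ← ofReal_norm,
            ENNReal.ofReal_rpow_of_nonneg (by positivity) p0.le] at h4
          exact ((ENNReal.ofReal_eq_ofReal_iff hS0 (by positivity)).1 h4).symm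
        · intro u hu
          rw [hx]
          simp only [hu, if_false]
          simp [p0]
      rw [← h3, ← Real.rpow_mul (norm_nonneg x)]
      field_simp
      simp
    have h3 : S * ‖μ v‖ ≤ ‖T‖ * S ^ (1 / p) := by
      have := (coord_le hp hX (T x) v).trans (T.le_opNorm x)
      rwa [h1, h2, norm_mul, RCLike.norm_ofReal, abs_of_nonneg hS0] at this
    rcases hS0.eq_or_lt with h0 | h0
    · rw [← h0]; positivity
    have h4 : S ^ (1 / q) ≤ K := by
      rw [hK, le_div_iff₀ hmv]
      have h5 : 0 < S ^ (1 / p) := by positivity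
      refine le_of_mul_le_mul_right ?_ h5
      calc S ^ (1 / q) * ‖μ v‖ * S ^ (1 / p) = (S ^ (1 / q) * S ^ (1 / p)) * ‖μ v‖ := by ring
        _ = S * ‖μ v‖ := by
          rw [← Real.rpow_add h0]
          have : 1 / q + 1 / p = 1 := by
            have := hpq.inv_add_inv_eq_one
            rw [one_div, one_div]; linarith
          rw [this, Real.rpow_one]
        _ ≤ _ := h3
    calc S = (S ^ (1 / q)) ^ q := by
          rw [← Real.rpow_mul hS0]; field_simp; simp
      _ ≤ K ^ q := Real.rpow_le_rpow (by positivity) h4 q0.le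
  have hterm : ∀ u : ↥(children par v), nw μ u.1 ^ (-q) = ENNReal.ofReal (‖μ u.1‖ ^ (-q)) := by
    intro u
    have hu0 : 0 < ‖μ u.1‖ := norm_pos_iff.2 (hμ u.1)
    rw [nw, ← enorm_eq_nnnorm, ← ofReal_norm, ENNReal.ofReal_rpow_of_pos hu0]
  simp_rw [hterm]
  refine ne_top_of_le_ne_top (ENNReal.ofReal_ne_top (r := K ^ q)) ?_
  rw [ENNReal.tsum_eq_iSup_sum]
  refine iSup_le fun F => ?_
  rw [← ENNReal.ofReal_sum_of_nonneg (fun u _ => by positivity)]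
  exact ENNReal.ofReal_le_ofReal (key F)

end Space
/-! ### The two directions -/

section Main

variable {𝕜 : Type*} [RCLike 𝕜] {X : Type*} [NormedAddCommGroup X] [NormedSpace 𝕜 X]

lemma finite_of_chaotic {par : V → Option V} (hTree : IsDirectedTree par)
    (hL : Leafless par) {μ : V → 𝕜} (hμ : ∀ v : V, μ v ≠ 0) {p : ℝ} (hp : 1 < p)
    {ι : X →ₗ[𝕜] V → 𝕜} (hX : IsLpSpaceRep ι μ p)
    (T : X →L[𝕜] X) (hT : IsShiftRep par (fun _ : V => (1 : 𝕜)) ι T)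
    (hper : Dense {x : X | IsPeriodicPoint T x}) (v₀ : V) :
    cpC (children par) (nw μ) p v₀ < ⊤ := by
  have p0 : 0 < p := by linarith
  obtain ⟨e, he⟩ := exists_single hp hX {v₀} (fun _ => (1 : 𝕜))
  obtain ⟨f, ⟨N, hN, hNf⟩, hfe⟩ := hper.exists_dist_lt e (norm_pos_iff.2 (hμ v₀))
  have hf0 : ι f v₀ ≠ 0 := by
    intro h0
    have h1 := coord_le hp hX (e - f) v₀
    rw [map_sub, Pi.sub_apply, h0, he] at h1
    simp only [Finset.mem_singleton, if_true, sub_zero, one_mul] at h1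
    rw [dist_eq_norm] at hfe
    linarith
  let g : ℕ → X := fun n => (T ^ (n * (N - 1))) f
  have hg : ∀ n, T (g (n + 1)) = g n := by
    intro n
    simp only [g]
    have h1 : (T ^ (n * (N - 1))) f = (T ^ (n * (N - 1))) ((T ^ N) f) := by rw [hNf]
    rw [h1, ← mul_apply_eq_comp, ← mul_apply_eq_comp (T ^ (n * (N - 1))), ← pow_add, ← pow_succ']
    congr 2
    obtain ⟨M, rfl⟩ := Nat.exists_eq_add_of_le hN
    simp; ring
  have hgm : ∀ n, ∃ r ∈ Finset.range N, g n = (T ^ r) f := by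
    intro n
    refine ⟨(n * (N - 1)) % N, Finset.mem_range.2 (Nat.mod_lt _ (by omega)), ?_⟩
    have hk : ∀ k, (T ^ (N * k)) f = f := by
      intro k
      induction k with
      | zero => simp
      | succ k ih => rw [mul_add, mul_one, pow_add, mul_apply_eq_comp, hNf, ih]
    simp only [g]
    conv_lhs => rw [← Nat.mod_add_div (n * (N - 1)) N, pow_add, mul_apply_eq_comp, hk]
  let H : V → ℝ≥0∞ := fun u => ∑' n, if parIter par n u = some v₀ then (‖ι (g n) u‖₊ : ℝ≥0∞) else 0
  have Heq : ∀ n u, parIter par n u = some v₀ → H u = (‖ι (g n) u‖₊ : ℝ≥0∞) := by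
    intro n u h
    simp only [H]
    rw [tsum_eq_single n]
    · rw [if_pos h]
    · intro m hm
      rw [if_neg]
      exact fun h' => hm (parIter_inj hTree h' h)
  have Hzero : ∀ u, (∀ n, parIter par n u ≠ some v₀) → H u = 0 := by
    intro u h
    simp [H, h]
  refine cpC_lt_top_of_flow hTree hL hp (nw μ) (fun v => by simp [nw, hμ v]) H ?_ ?_ v₀ ?_ ?_
  · intro w
    by_cases hw : ∃ n, parIter par n w = some v₀
    · obtain ⟨n, hn⟩ := hw
      have h1 : ∀ u : ↥(children par w), H u.1 = (‖ι (g (n + 1)) u.1‖₊ : ℝ≥0∞) := fun u =>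
        Heq _ _ (by rw [parIter_succ' par n u.2]; exact hn)
      simp_rw [h1]
      rw [Heq n w hn]
      have h2 := hT (g (n + 1)) w
      rw [hg] at h2
      simp only [one_mul] at h2
      rw [← h2.tsum_eq]
      exact enorm_tsum_le_tsum_enorm (f := fun b : ↥(children par w) => ι (g (n + 1)) b.1)
    · push Not at hw
      rw [Hzero w hw]
      exact bot_le
  · have hbd : ∀ u, H u ^ p * nw μ u ^ p ≤
        ∑ r ∈ Finset.range N, (‖ι ((T ^ r) f) u * μ u‖₊ : ℝ≥0∞) ^ p := by
      intro u
      by_cases hw : ∃ n, parIter par n u = some v₀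
      · obtain ⟨n, hn⟩ := hw
        obtain ⟨r, hr, hgr⟩ := hgm n
        rw [Heq n u hn, hgr, nw, ← ENNReal.mul_rpow_of_nonneg _ _ p0.le, ← ENNReal.coe_mul,
          ← nnnorm_mul]
        exact Finset.single_le_sum
          (f := fun r => (‖ι ((T ^ r) f) u * μ u‖₊ : ℝ≥0∞) ^ p) (fun _ _ => bot_le) hr
      · push Not at hw
        rw [Hzero u hw]
        simp [p0]
    refine ne_top_of_le_ne_top ?_ (ENNReal.tsum_le_tsum hbd)
    rw [Summable.tsum_finsetSum (fun _ _ => ENNReal.summable)]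
    refine (ENNReal.sum_lt_top.2 fun r _ => ?_).ne
    exact (hX.2.1 _).2 ⟨_, rfl⟩
  · rw [Heq 0 v₀ rfl]
    simp [g, hf0]
  · rw [Heq 0 v₀ rfl]
    simp

lemma chaotic_of_finite [CompleteSpace X] {par : V → Option V} (hTree : IsDirectedTree par)
    (hL : Leafless par) {root : V} (hroot : IsRoot par root)
    {μ : V → 𝕜} (hμ : ∀ v : V, μ v ≠ 0) {p : ℝ} (hp : 1 < p)
    {ι : X →ₗ[𝕜] V → 𝕜} (hX : IsLpSpaceRep ι μ p)
    (T : X →L[𝕜] X) (hT : IsShiftRep par (fun _ : V => (1 : 𝕜)) ι T)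
    (hc : ∀ v : V, cpC (children par) (nw μ) p v < ⊤) : ChaoticOp T := by
  have p0 : 0 < p := by linarith
  have := hTree.countable
  obtain ⟨P, hP0, hPflow, hPfin⟩ := exists_flow hTree hL hroot hp (nw μ)
    (fun v => by simp [nw, hμ v]) (fun v => by simp [nw])
    (weights_summable hμ hp hX T hT) hc
  let R : V → 𝕜 := fun v => (((P v).toReal : ℝ) : 𝕜)
  have hR0 : ∀ v, R v ≠ 0 := fun v => by
    simp [R, ENNReal.toReal_eq_zero_iff, hP0 v]
  have hRflow : ∀ v, HasSum (fun u : ↥(children par v) => R u.1) (R v) := by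
    intro v
    have h1 : ∑' u : ↥(children par v), P u.1 ≠ ⊤ := by rw [hPflow]; exact (hP0 v).2
    have h2 := ENNReal.hasSum_toReal h1
    rw [← ENNReal.tsum_toReal_eq (fun u : ↥(children par v) => (hP0 u.1).2), hPflow] at h2
    exact (RCLike.hasSum_ofReal 𝕜).2 h2
  obtain ⟨x₀, hx₀⟩ : R ∈ Set.range ι := by
    refine (hX.2.1 R).1 ?_
    convert hPfin.lt_top using 3 with v
    rw [← ENNReal.mul_rpow_of_nonneg _ _ p0.le]
    congr 1
    rw [nnnorm_mul, ENNReal.coe_mul, nw]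
    congr 1
    rw [← enorm_eq_nnnorm, ← ofReal_norm]
    simp [R, (hP0 v).2]
  choose E hE using exists_sub hp hX x₀
  rw [hx₀] at hE
  choose e he using fun v => exists_single hp hX {v} (fun _ => (1 : 𝕜))
  have he' : ∀ v u, ι (e v) u = if u = v then 1 else 0 := by
    intro v u; rw [he]; simp
  have hTE : ∀ A A' : Set V, (∀ u w, par u = some w → (u ∈ A ↔ w ∈ A')) → T (E A) = E A' := by
    intro A A' h
    apply hX.1
    funext w
    refine (hT (E A) w).unique ?_
    rw [hE, hE]
    by_cases hw : w ∈ A'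
    · simp only [hw, if_true, one_mul]
      convert hRflow w using 2 with u
      rw [if_pos ((h u.1 w u.2).2 hw)]
    · simp only [hw, if_false, one_mul]
      convert hasSum_zero using 2 with u
      rw [if_neg (fun h' => hw ((h u.1 w u.2).1 h'))]
  have hTe : ∀ v w, par v = some w → T (e v) = e w := by
    intro v w h
    apply hX.1
    funext z
    refine (hT (e v) z).unique ?_
    simp only [he', one_mul]
    by_cases hz : z = w
    · subst hz
      rw [if_pos rfl]
      convert hasSum_ite_eq (⟨v, h⟩ : ↥(children par z)) (1 : 𝕜) using 2 with u
      simp [Subtype.ext_iff]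
    · rw [if_neg hz]
      convert hasSum_zero using 2 with u
      rw [if_neg]
      intro h'
      have h2 : par u.1 = some z := u.2
      rw [h', h] at h2
      exact hz (Option.some.inj h2).symm
  have hTe0 : ∀ v, par v = none → T (e v) = 0 := by
    intro v h
    apply hX.1
    funext z
    refine (hT (e v) z).unique ?_
    simp only [he', one_mul, map_zero, Pi.zero_apply]
    convert hasSum_zero using 2 with u
    rw [if_neg]
    intro h'
    have h2 : par u.1 = some z := u.2
    rw [h', h] at h2
    cases h2
  have hTn : ∀ n v, parIter par n v = some root → (T ^ (n + 1)) (e v) = 0 := by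
    intro n
    induction n with
    | zero =>
      intro v h
      simp only [parIter, Option.some.injEq] at h
      subst h
      simpa using hTe0 v hroot
    | succ n ih =>
      intro v h
      rw [pow_succ, mul_apply_eq_comp]
      cases hv : par v with
      | none => rw [hTe0 v hv, map_zero]
      | some w =>
        rw [hTe v w hv]
        exact ih w (by rw [← parIter_succ' par n hv]; exact h)
  have hEs : ∀ v, E {v} = R v • e v := by
    intro v
    apply hX.1
    funext z
    rw [hE, map_smul, Pi.smul_apply, he']
    by_cases hz : z = v
    · subst hz; simp
    · simp [hz]
  refine chaotic_of_good T (Set.range e) (Set.countable_range e) ?_ ?_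
  · rintro _ ⟨v, rfl⟩
    have hmem : e v ∈ Submodule.span 𝕜 {E {v}} := by
      rw [hEs]
      refine Submodule.mem_span_singleton.2 ⟨(R v)⁻¹, ?_⟩
      rw [smul_smul, inv_mul_cancel₀ (hR0 v), one_smul]
    refine goodVec_span T {E {v}} ?_ _ hmem
    rintro _ rfl
    have hz : ∀ᶠ n in atTop, (T ^ n) (E {v}) = 0 := by
      obtain ⟨d, hd⟩ := exists_depth hTree hroot v
      filter_upwards [eventually_ge_atTop (d + 1)] with n hn
      obtain ⟨k, rfl⟩ := Nat.exists_eq_add_of_le' hn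
      rw [hEs, map_smul, pow_add, mul_apply_eq_comp, hTn d v hd, map_zero, smul_zero]
    let F : (ℕ → Prop) → ℕ → Set V := fun K n => {u | ∃ j, K j ∧ parIter par (j + n) u = some v}
    have hF : ∀ K n, T (E (F K (n + 1))) = E (F K n) := by
      intro K n
      refine hTE _ _ fun u w h => ?_
      have : ∀ j, parIter par (j + (n + 1)) u = parIter par (j + n) w := fun j => by
        rw [← add_assoc]; exact parIter_succ' par _ h
      change (∃ j, _) ↔ (∃ j, _)
      simp only [this]
    have hFn : ∀ K n, (T ^ n) (E (F K n)) = E (F K 0) := by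
      intro K n
      induction n with
      | zero => simp
      | succ n ih => rw [pow_succ, mul_apply_eq_comp, hF, ih]
    have hFlim : ∀ K : ℕ → ℕ → Prop, Tendsto (fun n => E (F (K n) n)) atTop (𝓝 0) := by
      intro K
      refine tendsto_trunc hp hX x₀ (fun n => F (K n) n) ?_ _ ?_
      · intro u
        obtain ⟨d, hd⟩ := parIter_none hTree hroot u
        filter_upwards [eventually_gt_atTop d] with n hn
        rintro ⟨j, -, hj⟩
        rw [hd (j + n) (by omega)] at hj
        cases hj
      · intro n
        rw [hE, hx₀]
    refine ⟨hz, ⟨fun n => E (F (fun j => j = 0) n), hFlim _, ?_⟩,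
      ⟨fun n => E {v} + E (F (fun j => n ∣ j) n), ?_, ?_⟩⟩
    · refine Eventually.of_forall fun n => ?_
      rw [hFn]
      congr 1
      ext u
      change (∃ j, _) ↔ u = v
      simp [parIter]
    · simpa using (hFlim (fun n j => n ∣ j)).const_add (E {v})
    · filter_upwards [hz, eventually_ge_atTop 1] with n hn hn1
      rw [map_add, hn, zero_add, hFn]
      apply hX.1
      funext u
      rw [map_add, Pi.add_apply, hE, hE, hE]
      have hiff : u ∈ F (fun j => n ∣ j) 0 ↔ (u = v ∨ u ∈ F (fun j => n ∣ j) n) := by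
        constructor
        · rintro ⟨j, ⟨k, rfl⟩, hj⟩
          cases k with
          | zero => left; simpa [parIter] using hj
          | succ k => right; exact ⟨n * k, ⟨k, rfl⟩, by simpa [mul_add] using hj⟩
        · rintro (rfl | ⟨j, hj1, hj⟩)
          · exact ⟨0, dvd_zero _, rfl⟩
          · exact ⟨j + n, dvd_add hj1 dvd_rfl, by simpa using hj⟩
      have hdisj : u = v → u ∉ F (fun j => n ∣ j) n := by
        rintro rfl ⟨j, -, hj⟩
        exact hTree.acyclic u (j + n) (by omega) hj
      by_cases h1 : u = v
      · beta_reduce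
        rw [if_pos (hiff.2 (Or.inl h1)), if_pos (Set.mem_singleton_iff.2 h1), if_neg (hdisj h1), add_zero]
      · simp [h1, hiff]
  · intro x
    obtain ⟨φ, hφ⟩ := exists_injective_nat V
    choose y hy using fun n => exists_sub hp hX x {v | n ≤ φ v}
    have hlim : Tendsto y atTop (𝓝 0) := by
      refine tendsto_trunc hp hX x (fun n => {v | n ≤ φ v}) ?_ y hy
      intro v
      filter_upwards [eventually_gt_atTop (φ v)] with n hn
      simpa using hn
    have hlim2 : Tendsto (fun n => x - y n) atTop (𝓝 x) := by
      simpa using hlim.const_sub x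
    refine mem_closure_of_tendsto hlim2 (Eventually.of_forall fun n => ?_)
    have hfin : {v | φ v < n}.Finite := (Set.finite_lt_nat n).preimage hφ.injOn
    have : x - y n = ∑ v ∈ hfin.toFinset, ι x v • e v := by
      apply hX.1
      funext u
      rw [map_sub, Pi.sub_apply, hy, map_sum, Finset.sum_apply]
      simp only [map_smul, Pi.smul_apply, he', smul_eq_mul, mul_ite, mul_one, mul_zero]
      rw [Finset.sum_ite_eq]
      by_cases h : φ u < n
      · simp [h]
      · simp [h, not_lt.1 h]
    rw [this]
    exact Submodule.sum_mem _ fun v _ => Submodule.smul_mem _ _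
      (Submodule.subset_span ⟨v, rfl⟩)

end Main

/-- Theorem 7.1 / `t-charpmu`: on a leafless rooted tree, the unweighted
backward shift, as an operator on `ℓ^p(V,μ)` (`1 < p < ∞`), is chaotic if and only if
`c_p(V(v), μ) < ∞` for every vertex `v`. -/
theorem statement10
    {𝕜 : Type*} [RCLike 𝕜] {V : Type*} (par : V → Option V) (hTree : IsDirectedTree par)
    (hLeafless : Leafless par) (root : V) (hroot : IsRoot par root)
    (μ : V → 𝕜) (hμ : ∀ v : V, μ v ≠ 0) (p : ℝ) (hp : 1 < p)
    {X : Type*} [NormedAddCommGroup X] [NormedSpace 𝕜 X] [CompleteSpace X]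
    (ι : X →ₗ[𝕜] V → 𝕜) (hX : IsLpSpaceRep ι μ p)
    (T : X →L[𝕜] X) (hT : IsShiftRep par (fun _ : V => (1 : 𝕜)) ι T) :
    ChaoticOp T ↔ ∀ v : V, cpC (children par) (nw μ) p v < ⊤ := by
  exact ⟨fun h v => finite_of_chaotic hTree hLeafless hμ hp hX T hT h.2 v,
    fun h => chaotic_of_finite hTree hLeafless hroot hμ hp hX T hT h⟩
end PaperTree
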